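/- Let f ∈ ℂ[X₀,X₁] be homogeneous of degree d ≥ 3 and squarefree, and let F = Y^d − f(X₀,X₁) ∈ ℂ[Y,X₀,X₁]. Then the ℂ-vector space R_F^{2d−3} (the image of the degree-(2d−3) homogeneous part of ℂ[Y,X₀,X₁] in R_F = ℂ[Y,X₀,X₁]/J_F) has dimension (d−1)(d−2)/2, the genus of a smooth plane curve of degree d. -/

import Mathlib

open MvPolynomial

/-- The Jacobian ideal of a binary form `f ∈ ℂ[X₀,X₁] = S`: the ideal generated by the two
partial derivatives of `f`. -/
noncomputable def jacIdealS (f : MvPolynomial (Fin 2) ℂ) : Ideal (MvPolynomial (Fin 2) ℂ) :=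
  Ideal.span {pderiv 0 f, pderiv 1 f}

/-- The inclusion `S = ℂ[X₀,X₁] → T = ℂ[Y,X₀,X₁]`, where the variable `Y` of `T` is indexed
by `0` and `X₀, X₁` by `1, 2`. -/
noncomputable def embS : MvPolynomial (Fin 2) ℂ →ₐ[ℂ] MvPolynomial (Fin 3) ℂ :=
  rename Fin.succ

/-- `F = Y^d − f(X₀,X₁) ∈ T = ℂ[Y,X₀,X₁]`. -/
noncomputable def bigF (d : ℕ) (f : MvPolynomial (Fin 2) ℂ) : MvPolynomial (Fin 3) ℂ :=
  X 0 ^ d - embS f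

/-- The Jacobian ideal `J_F ⊆ T` of `F = Y^d − f`: the ideal generated by the three partial
derivatives `∂F/∂Y = d·Y^{d−1}`, `∂F/∂X₀ = −∂f/∂X₀`, `∂F/∂X₁ = −∂f/∂X₁`. -/
noncomputable def jacIdealT (d : ℕ) (f : MvPolynomial (Fin 2) ℂ) :
    Ideal (MvPolynomial (Fin 3) ℂ) :=
  Ideal.span {pderiv 0 (bigF d f), pderiv 1 (bigF d f), pderiv 2 (bigF d f)}

/-- `R_F^k`, the image of the degree-`k` homogeneous part of `T = ℂ[Y,X₀,X₁]` in the Jacobian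
ring `R_F = T/J_F`, as a `ℂ`-subspace of the quotient. -/
noncomputable def jacRingPieceT (d : ℕ) (f : MvPolynomial (Fin 2) ℂ) (k : ℕ) :
    Submodule ℂ (MvPolynomial (Fin 3) ℂ ⧸ jacIdealT d f) :=
  Submodule.map (Ideal.Quotient.mkₐ ℂ (jacIdealT d f)).toLinearMap
    (homogeneousSubmodule (Fin 3) ℂ k)

/-
If `p` and `q` are coprime forms of degree `m`, a relation `b p + c q = 0` forces `p ∣ c`, so it is
trivial as soon as `deg c < m`; comparing coefficients of powers of `Y` shows that `Y ^ m`, `p`, `q`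
have no nontrivial relation with coefficients of degree below `m` either. For a squarefree binary
form `f` of degree `d = m + 1` the partial derivatives are such a pair, by Euler's identity. Hence
the degree-`(2m - 1)` part of the ideal `(Y ^ m, p, q)` is a direct sum of three copies of the forms
of degree `m - 1`, and `dim R_F^(2d-3) = binom(2m+1, 2) - 3 binom(m+1, 2) = binom(m, 2)`.
-/

section Derivatives

variable {σ R K : Type*}

theorem totalDegree_pderiv_lt [CommSemiring R] {i : σ} {a : MvPolynomial σ R}
    (h : pderiv i a ≠ 0) : (pderiv i a).totalDegree < a.totalDegree := by
  obtain ⟨m, hm, hdeg⟩ :=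
    Finset.exists_mem_eq_sup _ (support_nonempty.mpr h) fun s : σ →₀ ℕ => s.sum fun _ e => e
  have hmem : m + Finsupp.single i 1 ∈ a.support := by
    rw [mem_support_iff, coeff_pderiv] at hm
    exact mem_support_iff.mpr (left_ne_zero_of_mul hm)
  have hle := le_totalDegree hmem
  rw [Finsupp.sum_add_index' (by simp) (by simp), Finsupp.sum_single_index rfl] at hle
  change (pderiv i a).totalDegree = _ at hdeg
  omega

theorem pderiv_eq_zero_of_dvd_pderiv [CommRing R] [IsDomain R] {i : σ} {a : MvPolynomial σ R}
    (h : a ∣ pderiv i a) : pderiv i a = 0 := by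
  by_contra hne
  exact (totalDegree_pderiv_lt hne).not_ge (totalDegree_le_of_dvd_of_isDomain h hne)

theorem eq_C_of_forall_pderiv_eq_zero [CommSemiring R] [NoZeroDivisors R] [CharZero R]
    {a : MvPolynomial σ R} (h : ∀ i, pderiv i a = 0) : a = C (coeff 0 a) := by
  classical
  ext m
  rw [coeff_C]
  split_ifs with hm
  · rw [← hm]
  · obtain ⟨i, hi⟩ := Finsupp.ne_iff.mp (Ne.symm hm)
    have hsub : m - Finsupp.single i 1 + Finsupp.single i 1 = m :=
      tsub_add_cancel_of_le (Finsupp.single_le_iff.mpr (Nat.one_le_iff_ne_zero.mpr hi))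
    have hcoeff := coeff_pderiv (i := i) a (m - Finsupp.single i 1)
    rw [h i, hsub, coeff_zero] at hcoeff
    exact (mul_eq_zero.mp hcoeff.symm).resolve_right (Nat.cast_add_one_ne_zero _)

theorem exists_not_dvd_pderiv_of_irreducible [Field K] [CharZero K] {a : MvPolynomial σ K}
    (ha : Irreducible a) : ∃ i, ¬ a ∣ pderiv i a := by
  by_contra! h
  have hC := eq_C_of_forall_pderiv_eq_zero fun i => pderiv_eq_zero_of_dvd_pderiv (h i)
  have hne : coeff 0 a ≠ 0 := fun h0 => ha.ne_zero (by rw [hC, h0, C_0])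
  exact ha.not_isUnit (hC ▸ hne.isUnit.map C)

theorem isUnit_of_squarefree_of_dvd_pderiv [Field K] [CharZero K] {f a : MvPolynomial σ K}
    (hf : Squarefree f) (haf : a ∣ f) (ha : ∀ i, a ∣ pderiv i f) : IsUnit a := by
  by_contra hunit
  have ha0 : a ≠ 0 := ne_zero_of_dvd_ne_zero hf.ne_zero haf
  obtain ⟨b, hb, hba⟩ := WfDvdMonoid.exists_irreducible_factor hunit ha0
  obtain ⟨g, rfl⟩ := hba.trans haf
  have hbg : ¬ b ∣ g := fun h => hb.not_isUnit (hf b (mul_dvd_mul_left b h))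
  obtain ⟨i, hi⟩ := exists_not_dvd_pderiv_of_irreducible hb
  have hmul : b ∣ pderiv i b * g := by
    have h := hba.trans (ha i)
    rwa [pderiv_mul, dvd_add_left (dvd_mul_right b _)] at h
  exact (hb.prime.dvd_or_dvd hmul).elim hi hbg

theorem dvd_of_forall_dvd_pderiv [Finite σ] [Field K] {d : ℕ} (hd : (d : K) ≠ 0)
    {f a : MvPolynomial σ K} (hf : f.IsHomogeneous d) (ha : ∀ i, a ∣ pderiv i f) : a ∣ f := by
  cases nonempty_fintype σ
  have hunit : IsUnit (d : MvPolynomial σ K) := by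
    simpa only [map_natCast] using hd.isUnit.map (C : K →+* MvPolynomial σ K)
  rw [← hunit.dvd_mul_left, ← nsmul_eq_mul, ← hf.sum_X_mul_pderiv]
  exact Finset.dvd_sum fun i _ => (ha i).mul_left _

theorem isRelPrime_pderiv [Field K] [CharZero K] {d : ℕ} (hd : d ≠ 0)
    {f : MvPolynomial (Fin 2) K} (hf : f.IsHomogeneous d) (hsf : Squarefree f) :
    IsRelPrime (pderiv 0 f) (pderiv 1 f) := fun _ h0 h1 =>
  have h := Fin.forall_fin_two.mpr ⟨h0, h1⟩
  isUnit_of_squarefree_of_dvd_pderiv hsf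
    (dvd_of_forall_dvd_pderiv (Nat.cast_ne_zero.mpr hd) hf h) h

end Derivatives

section Koszul

variable {ι σ R K : Type*} [Fintype ι]

/-- The degree-`k` piece of the quotient `R[σ] ⧸ I`: the image in the quotient of the forms of
degree `k`. The ideal `I` is arbitrary, so that the pieces need not form a grading. -/
noncomputable def quotientPiece [CommRing R] (I : Ideal (MvPolynomial σ R)) (k : ℕ) :
    Submodule R (MvPolynomial σ R ⧸ I) :=
  (homogeneousSubmodule σ R k).map (Ideal.Quotient.mkₐ R I).toLinearMap

/-- The last differential `(aᵢ) ↦ ∑ aᵢ gᵢ` of the Koszul complex of the family `g`, restricted to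
coefficients `aᵢ` that are forms of degree `e`; its kernel consists of the syzygies of `g` with
coefficients of degree `e`. -/
noncomputable def koszulMap [CommSemiring R] (e : ℕ) (g : ι → MvPolynomial σ R) :
    (ι → homogeneousSubmodule σ R e) →ₗ[R] MvPolynomial σ R :=
  ∑ i, LinearMap.mulRight R (g i) ∘ₗ (homogeneousSubmodule σ R e).subtype ∘ₗ LinearMap.proj i

theorem koszulMap_apply [CommSemiring R] (e : ℕ) (g : ι → MvPolynomial σ R)
    (a : ι → homogeneousSubmodule σ R e) :
    koszulMap e g a = ∑ i, (a i : MvPolynomial σ R) * g i := by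
  simp [koszulMap]

theorem homogeneousComponent_mul_of_isHomogeneous [CommSemiring R] {m : ℕ} (e : ℕ)
    (a : MvPolynomial σ R) {p : MvPolynomial σ R} (hp : p.IsHomogeneous m) :
    homogeneousComponent (e + m) (a * p) = homogeneousComponent e a * p := by
  let _ := MvPolynomial.gradedAlgebra (σ := σ) (R := R)
  rw [← decomposition.decompose'_apply, ← decomposition.decompose'_apply]
  exact DirectSum.coe_decompose_mul_add_of_right_mem (homogeneousSubmodule σ R) hp

theorem range_koszulMap [CommSemiring R] {m : ℕ} (e : ℕ) {g : ι → MvPolynomial σ R}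
    (hg : ∀ i, (g i).IsHomogeneous m) :
    LinearMap.range (koszulMap e g) =
      homogeneousSubmodule σ R (e + m) ⊓ (Ideal.span (Set.range g)).restrictScalars R := by
  ext x
  simp only [LinearMap.mem_range, Submodule.mem_inf, Submodule.restrictScalars_mem,
    mem_homogeneousSubmodule, Ideal.mem_span_range_iff_exists_fun, koszulMap_apply]
  constructor
  · rintro ⟨a, rfl⟩
    exact ⟨IsHomogeneous.sum _ _ _ fun i _ => (a i).2.mul (hg i), fun i => a i, rfl⟩
  · rintro ⟨hx, a, ha⟩
    refine ⟨fun i => ⟨homogeneousComponent e (a i), homogeneousComponent_mem e (a i)⟩, ?_⟩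
    calc ∑ i, homogeneousComponent e (a i) * g i
        = homogeneousComponent (e + m) (∑ i, a i * g i) := by
          simp only [map_sum, homogeneousComponent_mul_of_isHomogeneous e _ (hg _)]
      _ = x := by rw [ha, homogeneousComponent_eq_self hx]

theorem finrank_homogeneousSubmodule [Fintype σ] [CommRing R] [Nontrivial R] (n : ℕ) :
    Module.finrank R (homogeneousSubmodule σ R n) = (Fintype.card σ + n - 1).choose n := by
  classical
  have hmonomials : {d : σ →₀ ℕ | d.degree = n} =
      ((Finset.univ : Finset σ).finsuppAntidiag n : Set (σ →₀ ℕ)) := by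
    ext m
    simp [Finsupp.degree_eq_sum]
  rw [homogeneousSubmodule_eq_finsupp_supported,
    (AddMonoidAlgebra.supportedEquivFinsupp (R := R) (S := R)
      {d : σ →₀ ℕ | d.degree = n}).finrank_eq,
    hmonomials, Module.finrank_finsupp_self, ← Nat.card_eq_fintype_card,
    Nat.card_coe_set_eq, Set.ncard_coe_finset, Finset.card_finsuppAntidiag_nat_eq_choose,
    Finset.card_univ]

theorem finrank_quotientPiece_add [Finite σ] [Field K] {e m : ℕ} {g : ι → MvPolynomial σ K}
    (hg : ∀ i, (g i).IsHomogeneous m) (hinj : Function.Injective (koszulMap e g)) :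
    Module.finrank K (quotientPiece (Ideal.span (Set.range g)) (e + m)) +
        Fintype.card ι * Module.finrank K (homogeneousSubmodule σ K e) =
      Module.finrank K (homogeneousSubmodule σ K (e + m)) := by
  have hfin (n : ℕ) : Module.Finite K (homogeneousSubmodule σ K n) :=
    Module.Finite.iff_fg.mpr (homogeneousSubmodule_fg σ K n)
  set H := homogeneousSubmodule σ K (e + m)
  set π := (Ideal.Quotient.mkₐ K (Ideal.span (Set.range g))).toLinearMap
  have hker : (LinearMap.ker (π.domRestrict H)).map H.subtype =
      LinearMap.range (koszulMap e g) := by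
    have hπ : LinearMap.ker π = (Ideal.span (Set.range g)).restrictScalars K := by
      ext x
      exact Ideal.Quotient.eq_zero_iff_mem
    rw [LinearMap.ker_domRestrict, Submodule.map_comap_subtype, hπ, range_koszulMap e hg]
  rw [← LinearMap.finrank_range_add_finrank_ker (π.domRestrict H), LinearMap.range_domRestrict,
    ← Submodule.finrank_map_subtype_eq, hker, LinearMap.finrank_range_of_inj hinj,
    Module.finrank_pi_fintype, Finset.sum_const, Finset.card_univ, smul_eq_mul]
  rfl

end Koszul

section CoprimePair

variable {σ R : Type*} [CommRing R] [IsDomain R]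

theorem eq_zero_of_mul_add_mul_eq_zero [UniqueFactorizationMonoid R] {m : ℕ}
    {p q b c : MvPolynomial σ R} (hp : p.IsHomogeneous m) (hpq : IsRelPrime p q)
    (hc : c.totalDegree < m) (h : b * p + c * q = 0) : c = 0 := by
  by_contra hne
  have hdvd : p ∣ c := hpq.dvd_of_dvd_mul_right ⟨-b, by linear_combination h⟩
  have hle := totalDegree_le_of_dvd_of_isDomain hdvd hne
  rw [hp.totalDegree (ne_zero_of_dvd_ne_zero hne hdvd)] at hle
  omega

theorem koszulMap_injective_of_isRelPrime [UniqueFactorizationMonoid R] {e m : ℕ} (he : e < m)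
    {g : Fin 2 → MvPolynomial σ R} (hg : ∀ i, (g i).IsHomogeneous m)
    (hrel : IsRelPrime (g 0) (g 1)) : Function.Injective (koszulMap e g) := by
  refine (injective_iff_map_eq_zero _).mpr fun a ha => ?_
  rw [koszulMap_apply, Fin.sum_univ_two] at ha
  have hdeg (i : Fin 2) : (a i : MvPolynomial σ R).totalDegree < m :=
    (IsHomogeneous.totalDegree_le (a i).2).trans_lt he
  have h0 := eq_zero_of_mul_add_mul_eq_zero (hg 1) hrel.symm (hdeg 0) ((add_comm _ _).trans ha)
  have h1 := eq_zero_of_mul_add_mul_eq_zero (hg 0) hrel (hdeg 1) ha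
  exact funext (Fin.forall_fin_two.mpr ⟨Subtype.ext h0, Subtype.ext h1⟩)

end CoprimePair

section Suspension

variable {n : ℕ} {R K : Type*}

theorem finSuccEquiv_rename_succ [CommSemiring R] (p : MvPolynomial (Fin n) R) :
    finSuccEquiv R n (rename Fin.succ p) = Polynomial.C p := by
  induction p using MvPolynomial.induction_on with
  | C a => simp [finSuccEquiv_apply]
  | add p q hp hq => simp only [map_add, hp, hq]
  | mul_X p i hp => simp only [map_mul, hp, rename_X, finSuccEquiv_X_succ]

theorem coeff_finSuccEquiv_eq_zero_of_totalDegree_lt [CommSemiring R]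
    {p : MvPolynomial (Fin (n + 1)) R} {j : ℕ} (h : p.totalDegree < j) :
    (finSuccEquiv R n p).coeff j = 0 := by
  by_contra hne
  have hle := totalDegree_coeff_finSuccEquiv_add_le p j hne
  omega

theorem koszulMap_vecCons_X_pow_injective [CommRing R] {r e m : ℕ} (he : e < m)
    {g : Fin r → MvPolynomial (Fin n) R} (hg : ∀ k < m, Function.Injective (koszulMap k g)) :
    Function.Injective
      (koszulMap e (Matrix.vecCons (X 0 ^ m) fun i => rename Fin.succ (g i))) := by
  refine (injective_iff_map_eq_zero _).mpr fun a ha => ?_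
  simp only [koszulMap_apply, Fin.sum_univ_succ, Matrix.cons_val_zero, Matrix.cons_val_succ] at ha
  set b : Fin r → Polynomial (MvPolynomial (Fin n) R) := fun i => finSuccEquiv R n (a i.succ)
  have hrel (j : ℕ) (hj : j ≤ e) : ∑ i, (b i).coeff j * g i = 0 := by
    have h := congrArg (fun p => (finSuccEquiv R n p).coeff j) ha
    simpa [finSuccEquiv_rename_succ, finSuccEquiv_X_zero, Polynomial.coeff_mul_X_pow',
      Polynomial.finsetSum_coeff, (hj.trans_lt he).not_ge] using h
  have hcoeff (i : Fin r) (j : ℕ) : (b i).coeff j = 0 := by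
    rcases le_or_gt j e with hj | hj
    · let c (i : Fin r) : homogeneousSubmodule (Fin n) R (e - j) :=
        ⟨(b i).coeff j, IsHomogeneous.finSuccEquiv_coeff_isHomogeneous (a i.succ).2 j (e - j)
          (Nat.add_sub_of_le hj)⟩
      have hc : c = 0 := (injective_iff_map_eq_zero _).mp (hg (e - j) (by omega)) c
        ((koszulMap_apply _ _ _).trans (hrel j hj))
      exact congrArg Subtype.val (congrFun hc i)
    · exact coeff_finSuccEquiv_eq_zero_of_totalDegree_lt
        ((IsHomogeneous.totalDegree_le (a i.succ).2).trans_lt hj)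
  have hsucc (i : Fin r) : a i.succ = 0 := by
    refine Subtype.ext ((finSuccEquiv R n).injective ?_)
    rw [ZeroMemClass.coe_zero, map_zero]
    exact Polynomial.ext (hcoeff i)
  have hzero : a 0 = 0 := by
    simp only [hsucc, ZeroMemClass.coe_zero, zero_mul, Finset.sum_const_zero, add_zero] at ha
    exact Subtype.ext ((isRegular_X_pow m).right (ha.trans (zero_mul _).symm))
  exact funext (Fin.cases hzero hsucc)

/-- The Jacobian ideal of a polynomial `F`: the ideal generated by its partial derivatives. -/
noncomputable def jacobianIdeal {σ : Type*} [CommSemiring R] (F : MvPolynomial σ R) :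
    Ideal (MvPolynomial σ R) :=
  Ideal.span (Set.range fun i => pderiv i F)

theorem pderiv_zero_X_pow_sub_rename_succ [CommRing R] (d : ℕ) (f : MvPolynomial (Fin n) R) :
    pderiv 0 (X 0 ^ d - rename Fin.succ f) = C (d : R) * X 0 ^ (d - 1) := by
  have hvars : (0 : Fin (n + 1)) ∉ (rename Fin.succ f).vars := fun h => by
    simpa using vars_rename Fin.succ f h
  simp [pderiv_eq_zero_of_notMem_vars hvars]

theorem pderiv_succ_X_pow_sub_rename_succ [CommRing R] (d : ℕ) (f : MvPolynomial (Fin n) R)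
    (i : Fin n) :
    pderiv i.succ (X 0 ^ d - rename Fin.succ f) = -rename Fin.succ (pderiv i f) := by
  simp [pderiv_rename (Fin.succ_injective n), pderiv_X_of_ne (Fin.succ_ne_zero i).symm]

theorem jacobianIdeal_X_pow_sub_rename_succ [Field K] {d : ℕ} (hd : (d : K) ≠ 0)
    (f : MvPolynomial (Fin n) K) :
    jacobianIdeal (X 0 ^ d - rename Fin.succ f) =
      Ideal.span (Set.range
        (Matrix.vecCons (X 0 ^ (d - 1)) fun i => rename Fin.succ (pderiv i f))) := by
  rw [jacobianIdeal, Ideal.span, Submodule.span_range_eq_iSup, Ideal.span,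
    Submodule.span_range_eq_iSup]
  refine iSup_congr (Fin.cases ?_ fun i => ?_)
  · rw [pderiv_zero_X_pow_sub_rename_succ]
    exact Ideal.span_singleton_mul_left_unit (hd.isUnit.map C) _
  · rw [pderiv_succ_X_pow_sub_rename_succ]
    exact Ideal.span_singleton_neg _

end Suspension

theorem choose_two_mul_add_three (e : ℕ) :
    (2 * e + 3).choose 2 = (e + 1).choose 2 + 3 * (e + 2).choose 2 := by
  have h : ((2 * e + 3).choose 2 : ℚ) = (e + 1).choose 2 + 3 * (e + 2).choose 2 := by
    push_cast [Nat.cast_choose_two]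
    ring
  exact_mod_cast h

theorem finrank_quotientPiece_of_isRelPrime {K : Type*} [Field K] {e : ℕ}
    {g : Fin 2 → MvPolynomial (Fin 2) K} (hg : ∀ i, (g i).IsHomogeneous (e + 1))
    (hrel : IsRelPrime (g 0) (g 1)) :
    Module.finrank K (quotientPiece (Ideal.span (Set.range
      (Matrix.vecCons (X 0 ^ (e + 1)) fun i => rename Fin.succ (g i)))) (2 * e + 1)) =
      (e + 1).choose 2 := by
  have hforms : ∀ i, (Matrix.vecCons (X 0 ^ (e + 1)) (fun i => rename Fin.succ (g i)) i :
      MvPolynomial (Fin 3) K).IsHomogeneous (e + 1) :=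
    Fin.cases (isHomogeneous_X_pow 0 (e + 1)) fun i => (hg i).rename_isHomogeneous
  have hinj := koszulMap_vecCons_X_pow_injective e.lt_succ_self fun k hk =>
    koszulMap_injective_of_isRelPrime hk hg hrel
  have hdim := finrank_quotientPiece_add hforms hinj
  have hchoose (k : ℕ) :
      Module.finrank K (homogeneousSubmodule (Fin 3) K k) = (k + 2).choose 2 := by
    rw [finrank_homogeneousSubmodule, Fintype.card_fin, show 3 + k - 1 = k + 2 by omega,
      Nat.choose_symm_add]
  rw [hchoose, hchoose, Fintype.card_fin, show e + (e + 1) = 2 * e + 1 by omega,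
    choose_two_mul_add_three] at hdim
  exact Nat.add_right_cancel hdim

theorem stmt13_general {K : Type*} [Field K] [CharZero K] {d : ℕ} (hd : 2 ≤ d)
    {f : MvPolynomial (Fin 2) K} (hf : f.IsHomogeneous d) (hsf : Squarefree f) :
    Module.finrank K (quotientPiece (jacobianIdeal (X 0 ^ d - rename Fin.succ f)) (2 * d - 3)) =
      (d - 1) * (d - 2) / 2 := by
  obtain ⟨e, rfl⟩ := Nat.exists_eq_add_of_le' hd
  have hd0 : e + 2 ≠ 0 := by omega
  rw [jacobianIdeal_X_pow_sub_rename_succ (Nat.cast_ne_zero.mpr hd0),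
    show 2 * (e + 2) - 3 = 2 * e + 1 by omega]
  exact (finrank_quotientPiece_of_isRelPrime (fun _ => hf.pderiv)
    (isRelPrime_pderiv hd0 hf hsf)).trans (Nat.choose_two_right _)

theorem jacIdealT_eq_jacobianIdeal (d : ℕ) (f : MvPolynomial (Fin 2) ℂ) :
    jacIdealT d f = jacobianIdeal (X 0 ^ d - rename Fin.succ f) := by
  rw [jacobianIdeal, Set.range, jacIdealT]
  congr 1
  ext p
  simp [Fin.exists_fin_succ, eq_comm, bigF, embS]

/-- If `f ∈ ℂ[X₀,X₁]` is homogeneous of degree `d ≥ 3` and squarefree and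
`F = Y^d − f(X₀,X₁)`, then `R_F^{2d−3}` has dimension `(d−1)(d−2)/2`, the genus of a smooth
plane curve of degree `d`. -/
theorem stmt13 (d : ℕ) (hd : 3 ≤ d) (f : MvPolynomial (Fin 2) ℂ)
    (hf : f.IsHomogeneous d) (hsf : Squarefree f) :
    Module.finrank ℂ (jacRingPieceT d f (2 * d - 3)) = (d - 1) * (d - 2) / 2 := by
  change Module.finrank ℂ (quotientPiece (jacIdealT d f) _) = _
  rw [jacIdealT_eq_jacobianIdeal]
  exact stmt13_general (Nat.le_of_succ_le hd) hf hsf
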